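/- Let B ≥ 1 and T ≥ 1 be integers, and let p_j = ((B−1)/B)^{B−j} / (B·(1 − ((B−1)/B)^B)) for j = 1,…,B (with the convention 0^0 = 1). Define the cost c_j = (j−1) + B if j ≤ T, and c_j = T if j > T. Then the expected cost of the randomized strategy satisfies Σ_{j=1}^{B} p_j · c_j ≤ (e/(e−1)) · min(T, B), i.e., the randomized strategy is e/(e−1)-competitive against the offline optimum min(T, B). -/

import Mathlib

open Finset

/-!
Put `q = (B - 1) / B`, so that `B * (1 - q) = 1`. The unnormalised weights `q ^ (B - j)` equalise
the competitive ratio over all horizons: `∑ q ^ (B - j) * c_j = B * min T B` exactly, see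
`sum_weight_mul_cost`. Hence the expected cost equals `min T B / (1 - q ^ B)`, and the bound follows
from `q ^ B = (1 - 1 / B) ^ B ≤ exp (-1)`.
-/

/-- The equalising identity. The upper summation limit `N` is decoupled from the buying cost `b`:
passing from `N` to `N + 1` multiplies the sum by `q` and adds the cost of day `N + 1`, which makes
the identity an induction on `N`. -/
lemma sum_weight_mul_cost (b q : ℝ) (hq : b * q = b - 1) (T N : ℕ) :
    ∑ j ∈ Finset.Icc 1 N, q ^ (N - j) * (if j ≤ T then ((j : ℝ) - 1) + b else (T : ℝ)) =
      b * (min T N : ℕ) := by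
  induction N with
  | zero => simp
  | succ N ih =>
    rw [Finset.sum_Icc_succ_top (by omega)]
    have h : ∑ j ∈ Finset.Icc 1 N,
          q ^ (N + 1 - j) * (if j ≤ T then ((j : ℝ) - 1) + b else (T : ℝ)) =
        q * (b * (min T N : ℕ)) := by
      rw [← ih, Finset.mul_sum]
      refine Finset.sum_congr rfl fun j hj => ?_
      rw [Nat.sub_add_comm (Finset.mem_Icc.mp hj).2, pow_succ]
      ring
    rw [h]
    by_cases hT : N + 1 ≤ T
    · rw [min_eq_right hT, min_eq_right (by omega), if_pos hT]
      push_cast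
      simp only [Nat.sub_self, pow_zero]
      linear_combination (N : ℝ) * hq
    · rw [min_eq_left (by omega), min_eq_left (by omega), if_neg hT]
      simp only [Nat.sub_self, pow_zero]
      linear_combination (T : ℝ) * hq

/-- Ski rental: with buying cost `B`, horizon `T`, buying probabilities
`p_j = ((B−1)/B)^{B−j} / (B·(1 − ((B−1)/B)^B))` and costs `c_j = (j−1) + B` for `j ≤ T`,
`c_j = T` for `j > T`, the expected cost of the randomized strategy satisfies
`∑_{j=1}^{B} p_j c_j ≤ (e/(e−1)) · min(T, B)`, i.e. the strategy is
`e/(e−1)`-competitive against the offline optimum `min(T, B)`. -/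
theorem skiRental_e_competitive (B T : ℕ) (hB : 1 ≤ B) (hT : 1 ≤ T)
    (p : ℕ → ℝ)
    (hp : ∀ j, p j = (((B : ℝ) - 1) / B) ^ (B - j) /
      ((B : ℝ) * (1 - (((B : ℝ) - 1) / B) ^ B)))
    (c : ℕ → ℝ)
    (hc : ∀ j, c j = if j ≤ T then ((j : ℝ) - 1) + B else (T : ℝ)) :
    ∑ j ∈ Finset.Icc 1 B, p j * c j ≤
      (Real.exp 1 / (Real.exp 1 - 1)) * (min T B : ℕ) := by
  have hB1 : (1 : ℝ) ≤ B := by exact_mod_cast hB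
  have hB0 : (B : ℝ) ≠ 0 := by positivity
  set q : ℝ := ((B : ℝ) - 1) / B with hq
  have hBq : (B : ℝ) * q = B - 1 := by rw [hq]; field_simp
  have hsum : ∑ j ∈ Finset.Icc 1 B, p j * c j = (min T B : ℕ) / (1 - q ^ B) := by
    have h : ∀ j ∈ Finset.Icc 1 B, p j * c j =
        q ^ (B - j) * (if j ≤ T then ((j : ℝ) - 1) + B else (T : ℝ)) / (B * (1 - q ^ B)) := by
      intro j _
      rw [hp, hc]
      ring
    rw [Finset.sum_congr rfl h, ← Finset.sum_div, sum_weight_mul_cost _ _ hBq,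
      mul_div_mul_left _ _ hB0]
  have hqB : q ^ B ≤ Real.exp (-1) := by
    have h := Real.one_sub_div_pow_le_exp_neg (n := B) (t := 1) hB1
    rwa [show (1 : ℝ) - 1 / B = q by rw [hq]; field_simp] at h
  have he : 1 < Real.exp 1 := Real.one_lt_exp_iff.mpr one_pos
  have he' : Real.exp (-1) < 1 := Real.exp_lt_one_iff.mpr (by norm_num)
  have hconst : Real.exp 1 / (Real.exp 1 - 1) = 1 / (1 - Real.exp (-1)) := by
    rw [div_eq_div_iff (by linarith) (by linarith), mul_sub, ← Real.exp_add]
    norm_num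
  rw [hsum, hconst, div_mul_eq_mul_div, one_mul]
  exact div_le_div_of_nonneg_left (Nat.cast_nonneg _) (by linarith) (by linarith)
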